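/- Let 0 < d < 4/5. Then ∫₀¹∫₀¹ u^{2-2d}(1-u)^{1-2d} v^{1-d} (1-uv)^{-d} ₂F₁(1,d;2-d;v) dv du = [(1-d)² Γ(1-d)² Γ(2-2d)² Γ(3-3d) / (Γ(2-d) Γ(d) (4-5d) Γ(4-4d) Γ(5-5d))] · ₃F₂(2-2d, 3-3d, 4-5d; 4-4d, 5-5d; 1). -/

import Mathlib

open Real MeasureTheory

/-- Pochhammer symbol `(a)_k = a (a+1) ⋯ (a+k-1)` for real `a`. -/
noncomputable def poch (a : ℝ) (k : ℕ) : ℝ := (ascPochhammer ℝ k).eval a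

/-- Gaussian hypergeometric function `₂F₁(a,b;c;z)`. -/
noncomputable def hyp2F1 (a b c z : ℝ) : ℝ :=
  ∑' k : ℕ, (poch a k * poch b k) / poch c k * z ^ k / (Nat.factorial k)

/-- Generalized hypergeometric function `₃F₂(a₁,a₂,a₃;b₁,b₂;z)`. -/
noncomputable def hyp3F2 (a₁ a₂ a₃ b₁ b₂ z : ℝ) : ℝ :=
  ∑' k : ℕ, (poch a₁ k * poch a₂ k * poch a₃ k) / (poch b₁ k * poch b₂ k) * z ^ k /
    (Nat.factorial k)

/-- Generalized hypergeometric function `₄F₃(a₁,a₂,a₃,a₄;b₁,b₂,b₃;z)`. -/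
noncomputable def hyp4F3 (a₁ a₂ a₃ a₄ b₁ b₂ b₃ z : ℝ) : ℝ :=
  ∑' k : ℕ, (poch a₁ k * poch a₂ k * poch a₃ k * poch a₄ k) /
    (poch b₁ k * poch b₂ k * poch b₃ k) * z ^ k / (Nat.factorial k)


open Set

noncomputable def EE (r s : ℝ) : ENNReal := ENNReal.ofReal (r ^ s)

@[fun_prop]
lemma measurable_EE {α : Type*} [MeasurableSpace α] {f : α → ℝ} (hf : Measurable f) (s : ℝ) :
    Measurable (fun x => EE (f x) s) := by
  unfold EE
  fun_prop

lemma EE_add {r : ℝ} (hr : 0 < r) (s t : ℝ) : EE r s * EE r t = EE r (s + t) := by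
  unfold EE
  rw [← ENNReal.ofReal_mul (by positivity), Real.rpow_add hr]

lemma EE_zero (r : ℝ) : EE r 0 = 1 := by simp [EE]

lemma EE_mul {r q : ℝ} (hr : 0 < r) (hq : 0 < q) (s : ℝ) : EE (r * q) s = EE r s * EE q s := by
  unfold EE
  rw [← ENNReal.ofReal_mul (by positivity), Real.mul_rpow hr.le hq.le]

lemma EE_div {r q : ℝ} (hr : 0 < r) (hq : 0 < q) (s : ℝ) : EE (r / q) s = EE r s * EE q (-s) := by
  unfold EE
  rw [← ENNReal.ofReal_mul (by positivity), Real.div_rpow hr.le hq.le, Real.rpow_neg hq.le]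
  rfl

lemma EE_ne_top (r s : ℝ) : EE r s ≠ ⊤ := ENNReal.ofReal_ne_top

lemma one_sub_mul_pos {x y : ℝ} (hx : x < 1) (hy0 : 0 ≤ y) (hy : y ≤ 1) : 0 < 1 - x * y := by
  rcases hy0.eq_or_lt with h | h
  · simp [← h]
  · nlinarith

/-- image of the Möbius map -/
lemma mob_image {x a : ℝ} (hx1 : x < 1) (ha0 : 0 ≤ a) (ha : a < 1) :
    (fun y : ℝ => (1 - y) / (1 - x * y)) '' Ioo a 1 = Ioo 0 ((1 - a) / (1 - x * a)) := by
  have hpa : 0 < 1 - x * a := one_sub_mul_pos hx1 ha0 ha.le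
  ext z
  constructor
  · rintro ⟨y, ⟨h1, h2⟩, rfl⟩
    have hp : 0 < 1 - x * y := one_sub_mul_pos hx1 (ha0.trans h1.le) h2.le
    refine ⟨div_pos (by linarith) hp, ?_⟩
    show (1 - y) / (1 - x * y) < _
    rw [div_lt_div_iff₀ hp hpa]
    nlinarith
  · rintro ⟨h1, h2⟩
    rw [lt_div_iff₀ hpa] at h2
    have hz1 : z ≤ 1 ∨ 1 < z := le_or_gt _ _
    have hp : 0 < 1 - x * z := by
      by_contra hcon
      push Not at hcon
      nlinarith
    refine ⟨(1 - z) / (1 - x * z), ⟨?_, ?_⟩, ?_⟩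
    · rw [lt_div_iff₀ hp]; nlinarith
    · rw [div_lt_iff₀ hp]; nlinarith
    · have : 1 - x * ((1 - z) / (1 - x * z)) = (1 - x) / (1 - x * z) := by
        field_simp; ring
      have hpn := hp.ne'
      have h3 : 1 - (1 - z) / (1 - x * z) = z * (1 - x) / (1 - x * z) := by
        rw [eq_div_iff hpn, sub_mul, div_mul_cancel₀ _ hpn]; ring
      have hx : (1 - x) ≠ 0 := by linarith
      simp only [this, h3]
      rw [div_div_div_cancel_right₀ hpn, mul_div_assoc, div_self hx, mul_one]

lemma mob_cov {x a : ℝ} (hx1 : x < 1) (ha0 : 0 ≤ a) (ha : a < 1) (g : ℝ → ENNReal) :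
    ∫⁻ z in Ioo 0 ((1 - a) / (1 - x * a)), g z =
      ∫⁻ y in Ioo a 1, EE (1 - x) 1 * EE (1 - x * y) (-2) * g ((1 - y) / (1 - x * y)) := by
  rw [← mob_image hx1 ha0 ha, lintegral_image_eq_lintegral_abs_deriv_mul measurableSet_Ioo
    (f' := fun y => - ((1 - x) / (1 - x * y) ^ 2))]
  · refine setLIntegral_congr_fun measurableSet_Ioo ?_
    rintro y ⟨h1, h2⟩
    have hp : 0 < 1 - x * y := one_sub_mul_pos hx1 (ha0.trans h1.le) h2.le
    have hx : 0 < 1 - x := by linarith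
    show _ = _
    simp only
    congr 1
    unfold EE
    rw [← ENNReal.ofReal_mul (by positivity), abs_neg, abs_of_pos (by positivity)]
    congr 1
    rw [Real.rpow_neg hp.le]
    norm_num
    rfl
  · rintro y ⟨h1, h2⟩
    have hp : 0 < 1 - x * y := one_sub_mul_pos hx1 (ha0.trans h1.le) h2.le
    apply HasDerivAt.hasDerivWithinAt
    have := ((hasDerivAt_id y).const_sub 1).div (((hasDerivAt_id y).const_mul x).const_sub 1) hp.ne'
    have e : -((1 - x) / (1 - x * y) ^ 2) =
        (-1 * (1 - x * id y) - (1 - id y) * -(x * 1)) / (1 - x * id y) ^ 2 := by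
      rw [← neg_div]
      congr 1
      simp only [id]
      ring
    rw [e]
    exact this
  · rintro y ⟨h1, h2⟩ z ⟨h3, h4⟩ h
    have hp : 0 < 1 - x * y := one_sub_mul_pos hx1 (ha0.trans h1.le) h2.le
    have hp' : 0 < 1 - x * z := one_sub_mul_pos hx1 (ha0.trans h3.le) h4.le
    simp only at h
    rw [div_eq_div_iff hp.ne' hp'.ne'] at h
    have : (1 - x) * (y - z) = 0 := by linarith
    rcases mul_eq_zero.1 this with h | h <;> linarith

/-- Euler transformation -/
lemma euler {x : ℝ} (hx1 : x < 1) (p q r : ℝ) :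
    ∫⁻ y in Ioo (0:ℝ) 1, EE y p * EE (1 - y) q * EE (1 - x * y) r =
      EE (1 - x) (q + r + 1) *
        ∫⁻ y in Ioo (0:ℝ) 1, EE y q * EE (1 - y) p * EE (1 - x * y) (- p - q - r - 2) := by
  have h := mob_cov hx1 le_rfl zero_lt_one (fun y => EE y p * EE (1 - y) q * EE (1 - x * y) r)
  simp only [mul_zero, sub_zero, div_one] at h
  rw [h, ← lintegral_const_mul _ (by fun_prop)]
  refine setLIntegral_congr_fun measurableSet_Ioo ?_
  rintro y ⟨h1, h2⟩
  have hp : 0 < 1 - x * y := one_sub_mul_pos hx1 h1.le h2.le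
  have hx : 0 < 1 - x := by linarith
  have hy : 0 < 1 - y := by linarith
  have e1 : 1 - (1 - y) / (1 - x * y) = (y * (1 - x)) / (1 - x * y) := by
    rw [eq_div_iff hp.ne', sub_mul, div_mul_cancel₀ _ hp.ne']; ring
  have e2 : 1 - x * ((1 - y) / (1 - x * y)) = (1 - x) / (1 - x * y) := by field_simp; ring
  simp only [e1, e2]
  rw [EE_div hy hp, EE_div (by positivity) hp, EE_div hx hp, EE_mul h1 hx]
  rw [show q + r + 1 = 1 + q + r by ring, show -p - q - r - 2 = -2 + -p + -q + -r by ring]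
  simp only [← EE_add hx, ← EE_add hp]
  ring

lemma lint_rpow {w m : ℝ} (hw : 0 < w) (hm : 0 < m) :
    ∫⁻ z in Ioo 0 w, EE z (m - 1) = ENNReal.ofReal (1 / m) * EE w m := by
  unfold EE
  have hi : IntervalIntegrable (fun z : ℝ => z ^ (m - 1)) volume 0 w :=
    intervalIntegral.intervalIntegrable_rpow' (by linarith)
  rw [intervalIntegrable_iff_integrableOn_Ioo_of_le hw.le] at hi
  rw [← ofReal_integral_eq_lintegral_ofReal hi, ← integral_Ioc_eq_integral_Ioo,
    ← intervalIntegral.integral_of_le hw.le, integral_rpow (by left; linarith),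
    ← ENNReal.ofReal_mul (by positivity)]
  · congr 1
    rw [sub_add_cancel, Real.zero_rpow hm.ne']
    ring
  · refine (ae_restrict_iff' measurableSet_Ioo).2 (Filter.Eventually.of_forall ?_)
    intro z hz
    exact Real.rpow_nonneg hz.1.le _

lemma inner_v {u x m : ℝ} (hu : u < 1) (hx0 : 0 ≤ x) (hx : x < 1) (hm : 0 < m) :
    ∫⁻ v in Ioo x 1, EE (1 - v) (m - 1) * EE (1 - u * v) (- m - 1) =
      ENNReal.ofReal (1 / m) * EE (1 - u) (-1) * EE (1 - x) m * EE (1 - u * x) (-m) := by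
  have hu' : 0 < 1 - u := by linarith
  have hx' : 0 < 1 - x := by linarith
  have hp : 0 < 1 - u * x := one_sub_mul_pos hu hx0 hx.le
  have h := mob_cov hu hx0 hx (fun z => EE z (m - 1))
  rw [lint_rpow (by positivity) hm, EE_div hx' hp] at h
  rw [mul_assoc, mul_assoc, mul_left_comm, h, ← lintegral_const_mul _ (by fun_prop)]
  refine setLIntegral_congr_fun measurableSet_Ioo ?_
  rintro y ⟨h1, h2⟩
  have hp : 0 < 1 - u * y := one_sub_mul_pos hu (hx0.trans h1.le) h2.le
  have hy : 0 < 1 - y := by linarith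
  simp only
  rw [EE_div hy hp, show -m - 1 = -2 + (-(m-1)) by ring, ← EE_add hp, mul_assoc (EE (1 - u) 1),
    ← mul_assoc (EE (1 - u) (-1)), EE_add hu', show (-1 + 1 : ℝ) = 0 by norm_num, EE_zero]
  ring

lemma poch_pos {a : ℝ} (ha : 0 < a) (k : ℕ) : 0 < poch a k := ascPochhammer_pos k a ha

lemma poch_succ (a : ℝ) (k : ℕ) : poch a (k + 1) = poch a k * (a + k) := by
  simp [poch, ascPochhammer_succ_eval]

lemma Gamma_poch {a : ℝ} (ha : 0 < a) (k : ℕ) :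
    Real.Gamma (a + k) = poch a k * Real.Gamma a := by
  induction k with
  | zero => simp [poch]
  | succ k ih =>
    push_cast
    rw [← add_assoc, Real.Gamma_add_one (by positivity), ih, poch_succ]
    ring

lemma lint_beta {a b : ℝ} (ha : 0 < a) (hb : 0 < b) :
    ∫⁻ y in Ioo (0:ℝ) 1, EE y (a - 1) * EE (1 - y) (b - 1) =
      ENNReal.ofReal (ProbabilityTheory.beta a b) := by
  have hB := ProbabilityTheory.beta_pos ha hb
  have h := ProbabilityTheory.lintegral_betaPDF_eq_one ha hb
  rw [ProbabilityTheory.lintegral_betaPDF] at h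
  have h2 : ∫⁻ y in Ioo (0:ℝ) 1, EE y (a - 1) * EE (1 - y) (b - 1) =
      ENNReal.ofReal (ProbabilityTheory.beta a b) * ∫⁻ (x : ℝ) in Ioo 0 1,
        ENNReal.ofReal (1 / ProbabilityTheory.beta a b * x ^ (a - 1) * (1 - x) ^ (b - 1)) := by
    rw [← lintegral_const_mul _ (by fun_prop)]
    refine setLIntegral_congr_fun measurableSet_Ioo ?_
    rintro y ⟨h1, h2⟩
    have hy : 0 < 1 - y := by linarith
    simp only [EE]
    rw [← ENNReal.ofReal_mul (by positivity), ← ENNReal.ofReal_mul (by positivity)]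
    congr 1
    field_simp
  rw [h2, h, mul_one]

lemma beta_shift {a b : ℝ} (ha : 0 < a) (hb : 0 < b) (k : ℕ) :
    ProbabilityTheory.beta (a + k) b =
      ProbabilityTheory.beta a b * (poch a k / poch (a + b) k) := by
  unfold ProbabilityTheory.beta
  rw [show a + k + b = (a + b) + k by ring, Gamma_poch ha, Gamma_poch (by positivity)]
  have := poch_pos (show 0 < a + b by positivity) k
  have := Real.Gamma_pos_of_pos (show 0 < a + b by positivity)
  field_simp

lemma binom_series {a z : ℝ} (hz0 : 0 ≤ z) (hz : z < 1) :
    HasSum (fun k : ℕ => poch a k / (Nat.factorial k) * z ^ k) ((1 - z) ^ (-a)) := by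
  have h := (Real.one_div_one_sub_rpow_hasFPowerSeriesOnBall_zero a).hasSum (y := z)
    (by simp [enorm_eq_nnnorm, ← NNReal.coe_lt_coe, abs_of_nonneg hz0, hz])
  simp only [zero_add] at h
  rw [Real.rpow_neg (by linarith), ← one_div]
  refine (funext fun k => ?_ : (fun k : ℕ => poch a k / (Nat.factorial k) * z ^ k) = _) ▸ h
  have h1 : Ring.choose (a + k - 1) k = poch a k / (Nat.factorial k) := by
    have := Ring.factorial_nsmul_multichoose_eq_ascPochhammer a k
    rw [Ring.choose, show a + k - 1 - k + 1 = a by ring, eq_div_iff (by positivity), poch,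
      ← Polynomial.ascPochhammer_smeval_eq_eval, ← this]
    simp [mul_comm]
  simp [h1, mul_comm]

lemma EE_series {a z : ℝ} (ha : 0 < a) (hz0 : 0 ≤ z) (hz : z < 1) :
    EE (1 - z) (-a) = ∑' k : ℕ, ENNReal.ofReal (poch a k / (Nat.factorial k) * z ^ k) := by
  have h := binom_series (a := a) hz0 hz
  rw [EE, ← h.tsum_eq, ENNReal.ofReal_tsum_of_nonneg _ h.summable]
  intro k
  have := poch_pos ha k
  positivity

noncomputable def TT (a b c x : ℝ) : ENNReal :=
  ∑' k : ℕ, ENNReal.ofReal ((poch a k * poch b k) / poch c k * x ^ k / (Nat.factorial k))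

lemma TT_comm (a b c x : ℝ) : TT a b c x = TT b a c x := by
  unfold TT; simp only [mul_comm]

@[fun_prop]
lemma measurable_TT (a b c : ℝ) : Measurable (TT a b c) := by
  unfold TT
  exact Measurable.tsum (fun k => by fun_prop)

/-- Euler integral -/
lemma euler_int {a b c x : ℝ} (ha : 0 < a) (hb : 0 < b) (hc : 0 < c) (hx0 : 0 < x) (hx : x < 1) :
    ∫⁻ y in Ioo (0:ℝ) 1, EE y (b - 1) * EE (1 - y) (c - 1) * EE (1 - x * y) (-a) =
      ENNReal.ofReal (ProbabilityTheory.beta b c) * TT a b (b + c) x := by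
  have hB := ProbabilityTheory.beta_pos hb hc
  have h1 : ∫⁻ y in Ioo (0:ℝ) 1, EE y (b - 1) * EE (1 - y) (c - 1) * EE (1 - x * y) (-a) =
      ∫⁻ y in Ioo (0:ℝ) 1, ∑' k : ℕ, ENNReal.ofReal (poch a k / (Nat.factorial k) * x ^ k) *
        (EE y (b + k - 1) * EE (1 - y) (c - 1)) := by
    refine setLIntegral_congr_fun measurableSet_Ioo ?_
    rintro y ⟨h1, h2⟩
    simp only
    rw [EE_series ha (by positivity) (by nlinarith), ← ENNReal.tsum_mul_left]
    congr 1
    ext k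
    have := poch_pos ha k
    rw [show b + k - 1 = (b - 1) + k by ring, ← EE_add h1, mul_pow, ← mul_assoc,
      ENNReal.ofReal_mul (by positivity)]
    have : EE y k = ENNReal.ofReal (y ^ k) := by simp [EE]
    rw [this]
    ring
  rw [h1, lintegral_tsum (fun k => by fun_prop), TT, ← ENNReal.tsum_mul_left]
  congr 1
  ext k
  have := poch_pos ha k
  have := poch_pos hb k
  have := poch_pos (add_pos hb hc) k
  rw [lintegral_const_mul _ (by fun_prop), lint_beta (by positivity) hc, beta_shift hb hc,
    ← ENNReal.ofReal_mul (by positivity), ← ENNReal.ofReal_mul (by positivity)]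
  congr 1
  ring

open ProbabilityTheory in
lemma beta_one {a : ℝ} (ha : 0 < a) : beta a 1 = 1 / a := by
  have := Real.Gamma_pos_of_pos ha
  rw [beta, Real.Gamma_add_one ha.ne', Real.Gamma_one]
  field_simp

open ProbabilityTheory in
lemma beta_one' {a : ℝ} (ha : 0 < a) : beta 1 a = 1 / a := by
  rw [← beta_one ha, beta, beta, add_comm, mul_comm]

lemma WW {v : ℝ} (hv : 0 < v) (d r : ℝ) :
    EE v (1 - d) * ∫⁻ y in Ioo (0:ℝ) 1, EE y (-d) * EE (1 - v * y) r =
      ∫⁻ x in Ioo 0 v, EE x (-d) * EE (1 - x) r := by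
  have him : (fun y : ℝ => v * y) '' Ioo 0 1 = Ioo 0 v := by
    rw [Set.image_mul_left_Ioo hv]; simp
  rw [← him, lintegral_image_eq_lintegral_abs_deriv_mul measurableSet_Ioo (f' := fun _ => v),
    ← lintegral_const_mul _ (by fun_prop)]
  · refine setLIntegral_congr_fun measurableSet_Ioo ?_
    rintro y ⟨h1, h2⟩
    simp only
    have e : ENNReal.ofReal |v| = EE v 1 := by rw [EE, Real.rpow_one, abs_of_pos hv]
    rw [EE_mul hv h1, e, sub_eq_add_neg, ← EE_add hv]
    ring
  · intro y _
    apply HasDerivAt.hasDerivWithinAt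
    simpa using (hasDerivAt_id y).const_mul v
  · intro y _ z _ h
    exact mul_left_cancel₀ hv.ne' h

lemma step_T {d v : ℝ} (hd0 : 0 < d) (hd1 : d < 1) (hv0 : 0 < v) (hv1 : v < 1) :
    EE v (1 - d) * TT 1 d (2 - d) v =
      ENNReal.ofReal (1 - d) * EE (1 - v) (1 - 2 * d) *
        ∫⁻ x in Ioo 0 v, EE x (-d) * EE (1 - x) (2 * d - 2) := by
  have h := euler_int (a := d) (b := 1) (c := 1 - d) hd0 one_pos (by linarith) hv0 hv1
  rw [euler hv1, beta_one' (by linarith), TT_comm d 1, show 1 + (1 - d) = 2 - d by ring,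
    show 1 - d - 1 + -d + 1 = 1 - 2 * d by ring,
    show -((1:ℝ) - 1) - (1 - d - 1) - -d - 2 = 2 * d - 2 by ring,
    show 1 - d - 1 = -d by ring] at h
  simp only [sub_self, EE_zero, mul_one] at h
  have h2 : TT 1 d (2 - d) v = ENNReal.ofReal (1 - d) *
      (ENNReal.ofReal (1 / (1 - d)) * TT 1 d (2 - d) v) := by
    rw [← mul_assoc, ← ENNReal.ofReal_mul (by linarith), mul_one_div_cancel (by linarith)]
    simp
  rw [h2, ← h, ← WW hv0]
  ring

lemma step_U {d v : ℝ} (hv1 : v < 1) :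
    ∫⁻ u in Ioo (0:ℝ) 1, EE u (2 - 2 * d) * EE (1 - u) (1 - 2 * d) * EE (1 - v * u) (-d) =
      EE (1 - v) (2 - 3 * d) *
      ∫⁻ u in Ioo (0:ℝ) 1, EE u (1 - 2 * d) * EE (1 - u) (2 - 2 * d) *
        EE (1 - v * u) (5 * d - 5) := by
  rw [euler hv1, show 1 - 2 * d + -d + 1 = 2 - 3 * d by ring,
    show -(2 - 2 * d) - (1 - 2 * d) - -d - 2 = 5 * d - 5 by ring]

noncomputable def LL (d : ℝ) : ENNReal :=
  ∫⁻ u in Ioo (0:ℝ) 1, ∫⁻ v in Ioo (0:ℝ) 1,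
    EE u (2 - 2 * d) * EE (1 - u) (1 - 2 * d) * EE v (1 - d) * EE (1 - u * v) (-d) *
      TT 1 d (2 - d) v

lemma LL_step1 (d : ℝ) (hd0 : 0 < d) (hd1 : d < 1) :
    LL d = ENNReal.ofReal (1 - d) * ∫⁻ v in Ioo (0:ℝ) 1, EE (1 - v) (3 - 5 * d) *
      (∫⁻ x in Ioo 0 v, EE x (-d) * EE (1 - x) (2 * d - 2)) *
      ∫⁻ u in Ioo (0:ℝ) 1, EE u (1 - 2 * d) * EE (1 - u) (2 - 2 * d) *
        EE (1 - v * u) (5 * d - 5) := by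
  rw [LL, lintegral_lintegral_swap (by
    apply Measurable.aemeasurable
    apply Measurable.mul
    · fun_prop
    · exact (measurable_TT _ _ _).comp measurable_snd),
    ← lintegral_const_mul' _ _ ENNReal.ofReal_ne_top]
  refine setLIntegral_congr_fun measurableSet_Ioo ?_
  rintro v ⟨h1, h2⟩
  simp only
  have hv : 0 < 1 - v := by linarith
  have e : ∀ u, EE u (2 - 2 * d) * EE (1 - u) (1 - 2 * d) * EE v (1 - d) * EE (1 - u * v) (-d) *
      TT 1 d (2 - d) v = (EE v (1 - d) * TT 1 d (2 - d) v) *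
        (EE u (2 - 2 * d) * EE (1 - u) (1 - 2 * d) * EE (1 - v * u) (-d)) := by
    intro u
    rw [mul_comm v u]
    ring
  simp only [e]
  rw [lintegral_const_mul _ (by fun_prop), step_U h2, step_T hd0 hd1 h1 h2,
    show 3 - 5 * d = (1 - 2 * d) + (2 - 3 * d) by ring, ← EE_add hv]
  ring

lemma ind_left {v : ℝ} (h2 : v < 1) (f : ℝ → ENNReal) :
    ∫⁻ x in Ioo 0 v, f x = ∫⁻ x in Ioo (0:ℝ) 1, (if x < v then 1 else 0) * f x := by
  rw [← lintegral_indicator measurableSet_Ioo, ← lintegral_indicator measurableSet_Ioo]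
  congr 1
  ext x
  by_cases hx : x < v
  · have : x < 1 := hx.trans h2
    simp [indicator, hx, this]
  · simp [indicator, hx]

lemma ind_right {x : ℝ} (h2 : 0 < x) (f : ℝ → ENNReal) :
    ∫⁻ v in Ioo x 1, f v = ∫⁻ v in Ioo (0:ℝ) 1, (if x < v then 1 else 0) * f v := by
  rw [← lintegral_indicator measurableSet_Ioo, ← lintegral_indicator measurableSet_Ioo]
  congr 1
  ext v
  by_cases hx : x < v
  · have : 0 < v := h2.trans hx
    simp [indicator, hx, this]
  · simp [indicator, hx]

lemma meas_ind {α : Type*} [MeasurableSpace α] {f g : α → ℝ} (hf : Measurable f)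
    (hg : Measurable g) : Measurable (fun p => (if f p < g p then (1:ENNReal) else 0)) :=
  Measurable.ite (measurableSet_lt hf hg) measurable_const measurable_const

lemma LL_step2 (d : ℝ) (hd0 : 0 < d) (hd1 : d < 4 / 5) :
    LL d = ENNReal.ofReal (1 - d) * (ENNReal.ofReal (1 / (4 - 5 * d)) *
      ∫⁻ x in Ioo (0:ℝ) 1, EE x (-d) * EE (1 - x) (2 - 3 * d) *
      ∫⁻ u in Ioo (0:ℝ) 1, EE u (1 - 2 * d) * EE (1 - u) (1 - 2 * d) *
        EE (1 - x * u) (-(4 - 5 * d))) := by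
  rw [LL_step1 d hd0 (by linarith)]
  congr 1
  have h1 : ∫⁻ v in Ioo (0:ℝ) 1, EE (1 - v) (3 - 5 * d) *
      (∫⁻ x in Ioo 0 v, EE x (-d) * EE (1 - x) (2 * d - 2)) *
      (∫⁻ u in Ioo (0:ℝ) 1, EE u (1 - 2 * d) * EE (1 - u) (2 - 2 * d) *
        EE (1 - v * u) (5 * d - 5)) =
      ∫⁻ v in Ioo (0:ℝ) 1, ∫⁻ x in Ioo (0:ℝ) 1, ∫⁻ u in Ioo (0:ℝ) 1,
        (if x < v then 1 else 0) * (EE (1 - v) (3 - 5 * d) * (EE x (-d) * EE (1 - x) (2 * d - 2)) *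
          (EE u (1 - 2 * d) * EE (1 - u) (2 - 2 * d) * EE (1 - v * u) (5 * d - 5))) := by
    refine setLIntegral_congr_fun measurableSet_Ioo ?_
    rintro v ⟨h1, h2⟩
    simp only
    rw [ind_left h2, mul_right_comm, ← lintegral_const_mul _ (by
      have := meas_ind (measurable_id (α := ℝ)) (measurable_const (a := v))
      simp only [id] at this
      fun_prop)]
    congr 1
    ext x
    rw [mul_right_comm, ← lintegral_const_mul _ (by fun_prop)]
    congr 1
    ext u
    ring
  have hm : Measurable (fun p : (ℝ × ℝ) × ℝ => (if p.1.2 < p.1.1 then (1:ENNReal) else 0) *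
      (EE (1 - p.1.1) (3 - 5 * d) * (EE p.1.2 (-d) * EE (1 - p.1.2) (2 * d - 2)) *
          (EE p.2 (1 - 2 * d) * EE (1 - p.2) (2 - 2 * d) * EE (1 - p.1.1 * p.2) (5 * d - 5)))) := by
    have := meas_ind (α := (ℝ × ℝ) × ℝ) (f := fun p => p.1.2) (g := fun p => p.1.1) (by fun_prop)
      (by fun_prop)
    fun_prop
  rw [h1, lintegral_lintegral_swap, ← lintegral_const_mul' _ _ ENNReal.ofReal_ne_top]
  swap
  · exact (Measurable.lintegral_prod_right' hm).aemeasurable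
  refine setLIntegral_congr_fun measurableSet_Ioo ?_
  rintro x ⟨hx0, hx1⟩
  simp only
  have hx : 0 < 1 - x := by linarith
  rw [lintegral_lintegral_swap]
  swap
  · exact (hm.comp (f := fun q : ℝ × ℝ => ((q.1, x), q.2)) (by fun_prop)).aemeasurable
  rw [← lintegral_const_mul _ (by fun_prop), ← lintegral_const_mul _ (by fun_prop)]
  refine setLIntegral_congr_fun measurableSet_Ioo ?_
  rintro u ⟨hu0, hu1⟩
  simp only
  have hu : 0 < 1 - u := by linarith
  have e : ∀ v, (if x < v then (1:ENNReal) else 0) *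
      (EE (1 - v) (3 - 5 * d) * (EE x (-d) * EE (1 - x) (2 * d - 2)) *
          (EE u (1 - 2 * d) * EE (1 - u) (2 - 2 * d) * EE (1 - v * u) (5 * d - 5))) =
      (EE x (-d) * EE (1 - x) (2 * d - 2) * EE u (1 - 2 * d) * EE (1 - u) (2 - 2 * d)) *
      ((if x < v then (1:ENNReal) else 0) *
        (EE (1 - v) ((4 - 5 * d) - 1) * EE (1 - u * v) (-(4 - 5 * d) - 1))) := by
    intro v
    rw [show (4 - 5 * d) - 1 = 3 - 5 * d by ring, show -(4 - 5 * d) - 1 = 5 * d - 5 by ring,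
      mul_comm u v]
    ring
  simp only [e]
  rw [lintegral_const_mul _ (by
      have := meas_ind (measurable_const (a := x)) (measurable_id (α := ℝ))
      simp only [id] at this
      fun_prop), ← ind_right hx0, inner_v hu1 hx0.le hx1 (by linarith),
    show 2 - 3 * d = (2 * d - 2) + (4 - 5 * d) by ring, ← EE_add hx, mul_comm u x,
    show EE (1 - u) (1 - 2 * d) = EE (1 - u) (2 - 2 * d) * EE (1 - u) (-1) by
      rw [EE_add hu]; congr 1; ring]
  ring

noncomputable def HH (d : ℝ) : ENNReal :=
  ∑' k : ℕ, ENNReal.ofReal ((poch (2 - 2 * d) k * poch (3 - 3 * d) k * poch (4 - 5 * d) k) /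
    (poch (4 - 4 * d) k * poch (5 - 5 * d) k) * 1 ^ k / (Nat.factorial k))

noncomputable def NN (d : ℝ) : ENNReal :=
  ∫⁻ z in Ioo (0:ℝ) 1, EE z (3 - 5 * d) *
    ∫⁻ x in Ioo (0:ℝ) 1, EE x (2 - 3 * d) * EE (1 - x) (-d) * EE (1 - z * x) (2 * d - 2)

lemma LL_step3 (d : ℝ) (hd0 : 0 < d) (hd1 : d < 4 / 5) :
    LL d * ENNReal.ofReal (ProbabilityTheory.beta (4 - 5 * d) d) =
      ENNReal.ofReal (1 - d) * (ENNReal.ofReal (1 / (4 - 5 * d)) *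
      (ENNReal.ofReal (ProbabilityTheory.beta (2 - 2 * d) (2 - 2 * d)) * NN d)) := by
  rw [LL_step2 d hd0 hd1, mul_assoc, mul_assoc]
  congr 2
  have e1 : ∫⁻ x in Ioo (0:ℝ) 1, EE x (-d) * EE (1 - x) (2 - 3 * d) *
      (∫⁻ u in Ioo (0:ℝ) 1, EE u (1 - 2 * d) * EE (1 - u) (1 - 2 * d) *
        EE (1 - x * u) (-(4 - 5 * d))) =
      ∫⁻ x in Ioo (0:ℝ) 1, ENNReal.ofReal (ProbabilityTheory.beta (2 - 2 * d) (2 - 2 * d)) *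
        (EE x (-d) * EE (1 - x) (2 - 3 * d) * TT (4 - 5 * d) (2 - 2 * d) (4 - 4 * d) x) := by
    refine setLIntegral_congr_fun measurableSet_Ioo ?_
    rintro x ⟨hx0, hx1⟩
    simp only
    have h := euler_int (a := 4 - 5 * d) (b := 2 - 2 * d) (c := 2 - 2 * d) (by linarith)
      (by linarith) (by linarith) hx0 hx1
    rw [show 2 - 2 * d - 1 = 1 - 2 * d by ring, show 2 - 2 * d + (2 - 2 * d) = 4 - 4 * d by ring]
      at h
    rw [h]
    ring
  rw [e1, lintegral_const_mul _ (by fun_prop), mul_assoc]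
  congr 1
  have e2 : (∫⁻ x in Ioo (0:ℝ) 1, EE x (-d) * EE (1 - x) (2 - 3 * d) *
        TT (4 - 5 * d) (2 - 2 * d) (4 - 4 * d) x) *
        ENNReal.ofReal (ProbabilityTheory.beta (4 - 5 * d) d) =
      ∫⁻ x in Ioo (0:ℝ) 1, ∫⁻ z in Ioo (0:ℝ) 1, EE x (-d) * EE (1 - x) (2 - 3 * d) *
        (EE z (3 - 5 * d) * EE (1 - z) (d - 1) * EE (1 - x * z) (-(2 - 2 * d))) := by
    rw [← lintegral_mul_const _ (by fun_prop)]
    refine setLIntegral_congr_fun measurableSet_Ioo ?_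
    rintro x ⟨hx0, hx1⟩
    simp only
    have h := euler_int (a := 2 - 2 * d) (b := 4 - 5 * d) (c := d) (by linarith)
      (by linarith) (by linarith) hx0 hx1
    rw [show 4 - 5 * d - 1 = 3 - 5 * d by ring, show 4 - 5 * d + d = 4 - 4 * d by ring] at h
    rw [lintegral_const_mul _ (by fun_prop), h, TT_comm]
    ring
  rw [e2, lintegral_lintegral_swap (by
    apply Measurable.aemeasurable
    fun_prop), NN]
  refine setLIntegral_congr_fun measurableSet_Ioo ?_
  rintro z ⟨hz0, hz1⟩
  simp only
  have hz : 0 < 1 - z := by linarith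
  have e : ∀ x, EE x (-d) * EE (1 - x) (2 - 3 * d) *
        (EE z (3 - 5 * d) * EE (1 - z) (d - 1) * EE (1 - x * z) (-(2 - 2 * d))) =
      (EE z (3 - 5 * d) * EE (1 - z) (d - 1)) * (EE x (-d) * EE (1 - x) (2 - 3 * d) *
        EE (1 - z * x) (2 * d - 2)) := by
    intro x
    rw [mul_comm z x, neg_sub]
    ring
  simp only [e]
  rw [lintegral_const_mul _ (by fun_prop), euler hz1, ← mul_assoc, mul_assoc (EE z _), EE_add hz,
    show d - 1 + (2 - 3 * d + (2 * d - 2) + 1) = 0 by ring, EE_zero, mul_one,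
    show - -d - (2 - 3 * d) - (2 * d - 2) - 2 = 2 * d - 2 by ring]

lemma NN_eq (d : ℝ) (hd0 : 0 < d) (hd1 : d < 4 / 5) :
    NN d = ENNReal.ofReal (ProbabilityTheory.beta (3 - 3 * d) (1 - d)) *
      (ENNReal.ofReal (1 / (4 - 5 * d)) * HH d) := by
  have e1 : NN d = ∫⁻ z in Ioo (0:ℝ) 1,
      ENNReal.ofReal (ProbabilityTheory.beta (3 - 3 * d) (1 - d)) *
        ∑' k : ℕ, ENNReal.ofReal ((poch (2 - 2 * d) k * poch (3 - 3 * d) k) / poch (4 - 4 * d) k /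
          (Nat.factorial k)) * (EE z (4 - 5 * d + k - 1) * EE (1 - z) (1 - 1)) := by
    refine setLIntegral_congr_fun measurableSet_Ioo ?_
    rintro z ⟨hz0, hz1⟩
    simp only
    have h := euler_int (a := 2 - 2 * d) (b := 3 - 3 * d) (c := 1 - d) (by linarith)
      (by linarith) (by linarith) hz0 hz1
    rw [show 3 - 3 * d - 1 = 2 - 3 * d by ring, show 3 - 3 * d + (1 - d) = 4 - 4 * d by ring,
      show 1 - d - 1 = -d by ring, neg_sub] at h
    rw [h, mul_left_comm, TT, ← ENNReal.tsum_mul_left]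
    congr 2
    ext k
    have := poch_pos (show 0 < 2 - 2 * d by linarith) k
    have := poch_pos (show 0 < 3 - 3 * d by linarith) k
    have := poch_pos (show 0 < 4 - 4 * d by linarith) k
    have hk : ENNReal.ofReal (z ^ k) = EE z k := by simp [EE]
    rw [sub_self, EE_zero, mul_one, show 4 - 5 * d + k - 1 = (3 - 5 * d) + k by ring,
      ← EE_add hz0, mul_div_right_comm, ENNReal.ofReal_mul (by positivity), hk]
    ring
  rw [e1, lintegral_const_mul' _ _ ENNReal.ofReal_ne_top]
  congr 1
  rw [lintegral_tsum (fun k => by fun_prop), HH, ← ENNReal.tsum_mul_left]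
  congr 1
  ext k
  have hm : 0 < 4 - 5 * d := by linarith
  have := poch_pos (show 0 < 2 - 2 * d by linarith) k
  have := poch_pos (show 0 < 3 - 3 * d by linarith) k
  have := poch_pos (show 0 < 4 - 4 * d by linarith) k
  have := poch_pos (show 0 < 5 - 5 * d by linarith) k
  rw [lintegral_const_mul _ (by fun_prop), lint_beta (by positivity) one_pos,
    beta_shift hm one_pos, beta_one hm, ← ENNReal.ofReal_mul (by positivity),
    ← ENNReal.ofReal_mul (by positivity), show 4 - 5 * d + 1 = 5 - 5 * d by ring]
  congr 1
  field_simp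
  try simp

lemma EE_anti {r s t : ℝ} (hr : 0 < r) (hrs : r ≤ s) (ht : t ≤ 0) : EE s t ≤ EE r t :=
  ENNReal.ofReal_le_ofReal (Real.rpow_le_rpow_of_nonpos hr hrs ht)

lemma NN_lt_top (d : ℝ) (hd0 : 0 < d) (hd1 : d < 4 / 5) : NN d < ⊤ := by
  have h : NN d ≤ ∫⁻ z in Ioo (0:ℝ) 1, (EE z ((4 - 5 * d) - 1) * EE (1 - z) (d ^ 2 - 1)) *
      ∫⁻ x in Ioo (0:ℝ) 1, EE x ((3 - 3 * d) - 1) * EE (1 - x) ((1 - d) * d - 1) := by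
    refine setLIntegral_mono' measurableSet_Ioo ?_
    rintro z ⟨hz0, hz1⟩
    rw [mul_assoc]
    refine mul_le_mul' (le_of_eq (by congr 1; ring)) ?_
    rw [← lintegral_const_mul _ (by fun_prop)]
    refine setLIntegral_mono' measurableSet_Ioo ?_
    rintro x ⟨hx0, hx1⟩
    have hz : 0 < 1 - z := by linarith
    have hx : 0 < 1 - x := by linarith
    have hp : 0 < 1 - z * x := by nlinarith
    rw [show 2 * d - 2 = (d ^ 2 - 1) + (-(1 - d) ^ 2) by ring, ← EE_add hp,
      show (3 - 3 * d) - 1 = 2 - 3 * d by ring,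
      show (1 - d) * d - 1 = -d + (-(1 - d) ^ 2) by ring, ← EE_add hx]
    calc _ ≤ EE x (2 - 3 * d) * EE (1 - x) (-d) *
          (EE (1 - z) (d ^ 2 - 1) * EE (1 - x) (-(1 - d) ^ 2)) := by
          gcongr
          · exact EE_anti hz (by nlinarith) (by nlinarith)
          · exact EE_anti hx (by nlinarith) (by nlinarith)
      _ = _ := by ring
  refine h.trans_lt ?_
  rw [lintegral_mul_const _ (by fun_prop), lint_beta (by linarith) (by positivity),
    lint_beta (by linarith) (by nlinarith)]
  exact ENNReal.mul_lt_top ENNReal.ofReal_lt_top ENNReal.ofReal_lt_top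

theorem double_integral_I2a_form2 (d : ℝ) (hd0 : 0 < d) (hd1 : d < 4 / 5) :
    (∫ u in (0:ℝ)..1, ∫ v in (0:ℝ)..1,
      u ^ (2 - 2 * d) * (1 - u) ^ (1 - 2 * d) * v ^ (1 - d) * (1 - u * v) ^ (-d) *
        hyp2F1 1 d (2 - d) v)
    = (1 - d) ^ 2 * Real.Gamma (1 - d) ^ 2 * Real.Gamma (2 - 2 * d) ^ 2 *
        Real.Gamma (3 - 3 * d) /
        (Real.Gamma (2 - d) * Real.Gamma d * (4 - 5 * d) * Real.Gamma (4 - 4 * d) *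
          Real.Gamma (5 - 5 * d)) *
        hyp3F2 (2 - 2 * d) (3 - 3 * d) (4 - 5 * d) (4 - 4 * d) (5 - 5 * d) 1 := by
  have hpos : ∀ k : ℕ, 0 ≤ poch 1 k * poch d k / poch (2 - d) k / (Nat.factorial k) := by
    intro k
    have := poch_pos one_pos k
    have := poch_pos hd0 k
    have := poch_pos (show 0 < 2 - d by linarith) k
    positivity
  have hm : 0 < 4 - 5 * d := by linarith
  have hLeq := LL_step3 d hd0 hd1
  have hNtop := NN_lt_top d hd0 hd1
  have hb1 := ProbabilityTheory.beta_pos hm hd0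
  have hb2 := ProbabilityTheory.beta_pos (show 0 < 2 - 2 * d by linarith)
    (show 0 < 2 - 2 * d by linarith)
  have hb3 := ProbabilityTheory.beta_pos (show 0 < 3 - 3 * d by linarith)
    (show 0 < 1 - d by linarith)
  have hLtop : LL d < ⊤ := by
    by_contra hcon
    rw [not_lt, top_le_iff] at hcon
    rw [hcon, ENNReal.top_mul (by simpa using hb1)] at hLeq
    have : ENNReal.ofReal (1 - d) * (ENNReal.ofReal (1 / (4 - 5 * d)) *
      (ENNReal.ofReal (ProbabilityTheory.beta (2 - 2 * d) (2 - 2 * d)) * NN d)) < ⊤ := by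
      refine ENNReal.mul_lt_top ENNReal.ofReal_lt_top (ENNReal.mul_lt_top ENNReal.ofReal_lt_top
        (ENNReal.mul_lt_top ENNReal.ofReal_lt_top hNtop))
    rw [← hLeq] at this
    exact lt_irrefl _ this
  have hH : (HH d).toReal =
      hyp3F2 (2 - 2 * d) (3 - 3 * d) (4 - 5 * d) (4 - 4 * d) (5 - 5 * d) 1 := by
    rw [HH, ENNReal.tsum_toReal_eq (fun _ => ENNReal.ofReal_ne_top), hyp3F2]
    congr 1
    ext k
    have := poch_pos (show 0 < 2 - 2 * d by linarith) k
    have := poch_pos (show 0 < 3 - 3 * d by linarith) k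
    have := poch_pos (show 0 < 4 - 4 * d by linarith) k
    have := poch_pos (show 0 < 5 - 5 * d by linarith) k
    have := poch_pos hm k
    rw [ENNReal.toReal_ofReal (by positivity)]
  have hT : ∀ v, 0 < v → v < 1 → hyp2F1 1 d (2 - d) v = (TT 1 d (2 - d) v).toReal := by
    intro v h1 h2
    rw [TT, ENNReal.tsum_toReal_eq (fun _ => ENNReal.ofReal_ne_top), hyp2F1]
    congr 1
    ext k
    have := poch_pos one_pos k
    have := poch_pos hd0 k
    have := poch_pos (show 0 < 2 - d by linarith) k
    rw [ENNReal.toReal_ofReal (by positivity)]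
  have hTtop : ∀ v, 0 < v → v < 1 → TT 1 d (2 - d) v < ⊤ := by
    intro v h1 h2
    have hle : TT 1 d (2 - d) v ≤ ∑' k : ℕ, ENNReal.ofReal (poch 1 k / (Nat.factorial k) * v ^ k) := by
      refine ENNReal.tsum_le_tsum (fun k => ENNReal.ofReal_le_ofReal ?_)
      have h3 := poch_pos one_pos k
      have h4 := poch_pos hd0 k
      have h5 := poch_pos (show 0 < 2 - d by linarith) k
      have h6 : poch d k ≤ poch (2 - d) k := by
        clear h3 h4 h5
        induction k with
        | zero => simp [poch]
        | succ k ih =>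
          rw [poch_succ, poch_succ]
          have := poch_pos (show 0 < 2 - d by linarith) k
          gcongr
          linarith
      have h7 : poch d k / poch (2 - d) k ≤ 1 := (div_le_one h5).2 h6
      calc _ = (poch 1 k / (Nat.factorial k) * v ^ k) * (poch d k / poch (2 - d) k) := by
            field_simp
        _ ≤ (poch 1 k / (Nat.factorial k) * v ^ k) * 1 := by gcongr
        _ = _ := mul_one _
    rw [← EE_series one_pos h1.le h2] at hle
    exact hle.trans_lt ENNReal.ofReal_lt_top
  have hinner : ∀ u ∈ Ioo (0:ℝ) 1, (∫ v in (0:ℝ)..1,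
      u ^ (2 - 2 * d) * (1 - u) ^ (1 - 2 * d) * v ^ (1 - d) * (1 - u * v) ^ (-d) *
        hyp2F1 1 d (2 - d) v) = (∫⁻ v in Ioo (0:ℝ) 1,
      EE u (2 - 2 * d) * EE (1 - u) (1 - 2 * d) * EE v (1 - d) * EE (1 - u * v) (-d) *
        TT 1 d (2 - d) v).toReal := by
    rintro u ⟨hu0, hu1⟩
    rw [intervalIntegral.integral_of_le zero_le_one, integral_Ioc_eq_integral_Ioo,
      ← integral_toReal]
    · refine setIntegral_congr_fun measurableSet_Ioo ?_
      rintro v ⟨hv0, hv1⟩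
      have hu : 0 < 1 - u := by linarith
      have hp : 0 < 1 - u * v := by nlinarith
      simp only [ENNReal.toReal_mul, EE]
      rw [hT v hv0 hv1, ENNReal.toReal_ofReal (by positivity), ENNReal.toReal_ofReal (by positivity),
        ENNReal.toReal_ofReal (by positivity), ENNReal.toReal_ofReal (by positivity)]
    · exact Measurable.aemeasurable (by fun_prop)
    · refine (ae_restrict_iff' measurableSet_Ioo).2 (Filter.Eventually.of_forall ?_)
      rintro v ⟨hv0, hv1⟩
      refine ENNReal.mul_lt_top ?_ (hTtop v hv0 hv1)
      simp only [EE]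
      refine ENNReal.mul_lt_top (ENNReal.mul_lt_top (ENNReal.mul_lt_top ?_ ?_) ?_) ?_ <;>
        exact ENNReal.ofReal_lt_top
  have hLHS : (∫ u in (0:ℝ)..1, ∫ v in (0:ℝ)..1,
      u ^ (2 - 2 * d) * (1 - u) ^ (1 - 2 * d) * v ^ (1 - d) * (1 - u * v) ^ (-d) *
        hyp2F1 1 d (2 - d) v) = (LL d).toReal := by
    have hmeas : Measurable (fun u : ℝ => ∫⁻ v in Ioo (0:ℝ) 1,
        EE u (2 - 2 * d) * EE (1 - u) (1 - 2 * d) * EE v (1 - d) * EE (1 - u * v) (-d) *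
        TT 1 d (2 - d) v) := by
      refine Measurable.lintegral_prod_right' (f := fun p : ℝ × ℝ =>
        EE p.1 (2 - 2 * d) * EE (1 - p.1) (1 - 2 * d) * EE p.2 (1 - d) * EE (1 - p.1 * p.2) (-d) *
        TT 1 d (2 - d) p.2) ?_
      exact Measurable.mul (by fun_prop) ((measurable_TT _ _ _).comp measurable_snd)
    rw [intervalIntegral.integral_of_le zero_le_one, integral_Ioc_eq_integral_Ioo,
      setIntegral_congr_fun measurableSet_Ioo hinner, integral_toReal hmeas.aemeasurable, LL]
    exact ae_lt_top hmeas hLtop.ne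
  rw [hLHS, ← hH]
  rw [NN_eq d hd0 hd1] at hLeq
  have h2 := congrArg ENNReal.toReal hLeq
  simp only [ENNReal.toReal_mul] at h2
  rw [ENNReal.toReal_ofReal hb1.le, ENNReal.toReal_ofReal hb2.le, ENNReal.toReal_ofReal hb3.le,
    ENNReal.toReal_ofReal (by linarith : (0:ℝ) ≤ 1 - d),
    ENNReal.toReal_ofReal (by positivity : (0:ℝ) ≤ 1 / (4 - 5 * d))] at h2
  rw [← eq_div_iff hb1.ne'] at h2
  rw [h2]
  simp only [ProbabilityTheory.beta]
  rw [show 2 - 2 * d + (2 - 2 * d) = 4 - 4 * d by ring, show 4 - 5 * d + d = 4 - 4 * d by ring,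
    show 3 - 3 * d + (1 - d) = 4 - 4 * d by ring,
    show Real.Gamma (5 - 5 * d) = (4 - 5 * d) * Real.Gamma (4 - 5 * d) by
      rw [← Real.Gamma_add_one hm.ne']; congr 1; ring,
    show Real.Gamma (2 - d) = (1 - d) * Real.Gamma (1 - d) by
      rw [← Real.Gamma_add_one (by linarith)]; congr 1; ring]
  have g1 := Real.Gamma_pos_of_pos hm
  have g2 := Real.Gamma_pos_of_pos hd0
  have g3 := Real.Gamma_pos_of_pos (show 0 < 1 - d by linarith)
  have g4 := Real.Gamma_pos_of_pos (show 0 < 4 - 4 * d by linarith)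
  have g5 : 0 < 1 - d := by linarith
  generalize Real.Gamma (4 - 5 * d) = G1 at *
  generalize Real.Gamma (4 - 4 * d) = G4 at *
  generalize Real.Gamma (1 - d) = G3 at *
  generalize Real.Gamma d = G2 at *
  generalize Real.Gamma (2 - 2 * d) = G5 at *
  generalize Real.Gamma (3 - 3 * d) = G6 at *
  field_simp
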